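/- arXiv:math/9904155 — 4 statements merged into one kernel-verified Lean document; each statement's English description precedes it below -/
import Mathlib

section
/- Let R be a commutative ring, M an R-module, and f, g : ℤ × ℤ → M two doubly indexed families, thought of as coefficients of formal series F(z₁,z₂) = Σ_{m,n} f(m,n) z₁^m z₂^n and G(z₁,z₂) = Σ_{m,n} g(m,n) z₁^m z₂^n. Suppose there exists an integer N such that f(m,n) = 0 and g(m,n) = 0 for all m > N and all n ∈ ℤ (i.e., both series involve only finitely many positive powers of z₁, uniformly in z₂). If for some nonnegative integer p one has, for all a, b ∈ ℤ, Σ_{k=0}^{p} (−1)^k · C(p,k) · f(a−p+k, b−k) = Σ_{k=0}^{p} (−1)^k · C(p,k) · g(a−p+k, b−k) (i.e., (z₁−z₂)^p F = (z₁−z₂)^p G as formal series), then f = g. -/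
/-! The coefficient of `z₁^(m+p) z₂^n` in `(z₁ - z₂)^p F` is `f (m, n)` plus a combination of
the `f (m + k, n - k)` with `k ≥ 1`. Hence `f (m, n) = g (m, n)` follows once `f` and `g` agree
at all larger first indices, and a downward induction on `m`, starting above `N` where both
families vanish, gives `f = g`. -/

/-- Cancellation principle for formal series in two variables whose coefficients
(in an `R`-module `M`) involve only finitely many positive powers of `z₁`:
if `(z₁ - z₂)^p • F = (z₁ - z₂)^p • G` coefficientwise, then `F = G`. -/
theorem stmt_2 {R : Type*} [CommRing R] {M : Type*} [AddCommGroup M] [Module R M]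
    (f g : ℤ × ℤ → M) (N : ℤ)
    (hf : ∀ m n : ℤ, N < m → f (m, n) = 0)
    (hg : ∀ m n : ℤ, N < m → g (m, n) = 0)
    (p : ℕ)
    (h : ∀ a b : ℤ,
      ∑ k ∈ Finset.range (p + 1),
        ((-1 : ℤ) ^ k * (p.choose k : ℤ)) • f (a - p + k, b - k)
      = ∑ k ∈ Finset.range (p + 1),
        ((-1 : ℤ) ^ k * (p.choose k : ℤ)) • g (a - p + k, b - k)) :
    f = g := by
  have key : ∀ d : ℕ, ∀ m n : ℤ, N - d < m → f (m, n) = g (m, n) := by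
    intro d
    induction d with
    | zero =>
      intro m n hm
      rw [hf m n (by simpa using hm), hg m n (by simpa using hm)]
    | succ d ih =>
      intro m n hm
      have hmn := h (m + p) n
      rw [Finset.sum_range_succ', Finset.sum_range_succ'] at hmn
      have htail : ∀ k ∈ Finset.range p,
          ((-1 : ℤ) ^ (k + 1) * (p.choose (k + 1) : ℤ)) •
              f (m + p - p + (k + 1 : ℕ), n - (k + 1 : ℕ))
            = ((-1 : ℤ) ^ (k + 1) * (p.choose (k + 1) : ℤ)) •
              g (m + p - p + (k + 1 : ℕ), n - (k + 1 : ℕ)) := by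
        intro k _
        rw [ih _ _ (by push_cast at hm ⊢; linarith)]
      rw [Finset.sum_congr rfl htail] at hmn
      simpa using hmn
  funext ⟨m, n⟩
  -- `d = (N - m + 1).toNat` satisfies `N - d < m`.
  exact key (N - m + 1).toNat m n (by omega)
end

section
/- Let R be a commutative ring, M an R-module, and f, g : ℤ × ℤ → M two doubly indexed families, thought of as coefficients of formal series F(z₁,z₂) = Σ_{m,n} f(m,n) z₁^m z₂^n and G(z₁,z₂) = Σ_{m,n} g(m,n) z₁^m z₂^n. Suppose there exists an integer N such that f(m,n) = 0 and g(m,n) = 0 for all m < −N and all n ∈ ℤ (i.e., both series involve only finitely many negative powers of z₁, uniformly in z₂). If for some nonnegative integer p one has, for all a, b ∈ ℤ, Σ_{k=0}^{p} (−1)^k · C(p,k) · f(a−p+k, b−k) = Σ_{k=0}^{p} (−1)^k · C(p,k) · g(a−p+k, b−k) (i.e., (z₁−z₂)^p F = (z₁−z₂)^p G as formal series), then f = g. -/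
/-! In the coefficient of `z₁^m z₂^(n+p)` of `(z₁ - z₂)^p F`, the term `k = p` is `± f (m, n)`, and
every other term involves only coefficients of `F` whose `z₁`-exponent is less than `m`. As the
`z₁`-exponents of `F` and `G` are bounded below, `f (m, n) = g (m, n)` follows by induction on `m`
starting from `-N`. -/

/-- Cancellation principle for formal series in two variables whose coefficients
(in an `R`-module `M`) involve only finitely many negative powers of `z₁`:
if `(z₁ - z₂)^p • F = (z₁ - z₂)^p • G` coefficientwise, then `F = G`. -/
theorem stmt_3 {R : Type*} [CommRing R] {M : Type*} [AddCommGroup M] [Module R M]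
    (f g : ℤ × ℤ → M) (N : ℤ)
    (hf : ∀ m n : ℤ, m < -N → f (m, n) = 0)
    (hg : ∀ m n : ℤ, m < -N → g (m, n) = 0)
    (p : ℕ)
    (h : ∀ a b : ℤ,
      ∑ k ∈ Finset.range (p + 1),
        ((-1 : ℤ) ^ k * (p.choose k : ℤ)) • f (a - p + k, b - k)
      = ∑ k ∈ Finset.range (p + 1),
        ((-1 : ℤ) ^ k * (p.choose k : ℤ)) • g (a - p + k, b - k)) :
    f = g := by
  have key : ∀ j : ℕ, ∀ m n : ℤ, m < -N + j → f (m, n) = g (m, n) := by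
    intro j
    induction j with
    | zero =>
      intro m n hm
      have hm' : m < -N := by simpa using hm
      rw [hf m n hm', hg m n hm']
    | succ j ih =>
      intro m n hm
      push_cast at hm
      have e := h m (n + p)
      rw [Finset.sum_range_succ, Finset.sum_range_succ] at e
      have hlow : ∀ k ∈ Finset.range p,
          ((-1 : ℤ) ^ k * (p.choose k : ℤ)) • f (m - p + k, n + p - k)
          = ((-1 : ℤ) ^ k * (p.choose k : ℤ)) • g (m - p + k, n + p - k) := by
        intro k hk
        have hk' := Finset.mem_range.mp hk
        rw [ih _ _ (by omega)]
      rw [Finset.sum_congr rfl hlow] at e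
      have e' := add_left_cancel e
      simp only [sub_add_cancel, add_sub_cancel_right, Nat.choose_self, Nat.cast_one,
        mul_one] at e'
      -- The remaining scalar `(-1)^p` is its own inverse.
      have e'' := congrArg (fun x => ((-1 : ℤ) ^ p) • x) e'
      simpa only [smul_smul, ← mul_pow, neg_mul_neg, one_mul, one_pow, one_smul] using e''
  funext ⟨m, n⟩
  exact key (m + N + 1).toNat m n (by omega)
end

section
/- Let V be a vector space over ℂ, let m ≥ 2 be an integer, and let x₂, x₃, …, x_m be elements of V. Suppose that for every integer k ≥ 1 one has Σ_{i=2}^{m} (i−1)^k · i^{k−1} · x_i = 0. Then x_i = 0 for every i with 2 ≤ i ≤ m. -/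
/-!
Put `c i = (i - 1) * i`. The hypothesis for exponent `k + 1` says that
`∑ i, c i ^ k • (i - 1) • x i = 0`, so by linearity `∑ i, p(c i) • (i - 1) • x i = 0` for every
polynomial `p`. The nodes `c i` with `i ≥ 2` are pairwise distinct, so taking for `p` the Lagrange
basis polynomial at `c j` isolates `(j - 1) • x j = 0`, and `j - 1 ≠ 0`.
-/

/-- Vandermonde-type vanishing: if `x₂, …, x_m` are vectors in a complex vector
space `V` such that `∑_{i=2}^{m} (i-1)^k · i^(k-1) • x_i = 0` for every integer
`k ≥ 1`, then `x_i = 0` for all `2 ≤ i ≤ m`. -/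
theorem stmt_4 {V : Type*} [AddCommGroup V] [Module ℂ V]
    (m : ℕ) (hm : 2 ≤ m) (x : ℕ → V)
    (h : ∀ k : ℕ, 1 ≤ k →
      ∑ i ∈ Finset.Icc 2 m, (((i : ℂ) - 1) ^ k * (i : ℂ) ^ (k - 1)) • x i = 0) :
    ∀ i, 2 ≤ i → i ≤ m → x i = 0 := by
  intro j hj2 hjm
  set c : ℕ → ℂ := fun i => ((i : ℂ) - 1) * i with hc
  have hpoly : ∀ p : Polynomial ℂ,
      ∑ i ∈ Finset.Icc 2 m, (p.eval (c i) * ((i : ℂ) - 1)) • x i = 0 := by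
    intro p
    induction p using Polynomial.induction_on' with
    | add p q hp hq =>
      simp only [Polynomial.eval_add, add_mul, add_smul, Finset.sum_add_distrib, hp, hq, add_zero]
    | monomial n a =>
      have hn := congrArg (a • ·) (h (n + 1) (by omega))
      simp only [Finset.smul_sum, smul_zero, smul_smul, Nat.add_sub_cancel] at hn
      rw [← hn]
      refine Finset.sum_congr rfl fun i _ => ?_
      congr 1
      simp only [Polynomial.eval_monomial, hc, mul_pow]
      ring
  have hinj : Set.InjOn c (Finset.Icc 2 m : Finset ℕ) := by
    intro a ha b hb hab
    simp only [Finset.coe_Icc, Set.mem_Icc] at ha hb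
    -- `c a - c b = (a - b) * (a + b - 1)`, and the second factor is nonzero.
    have hfac : ((a : ℂ) - b) * ((a : ℂ) + b - 1) = 0 := by
      simp only [hc] at hab
      linear_combination hab
    rcases mul_eq_zero.mp hfac with h1 | h1
    · exact_mod_cast sub_eq_zero.mp h1
    · have h2 : a + b = 1 := by exact_mod_cast sub_eq_zero.mp h1
      omega
  have hj : j ∈ Finset.Icc 2 m := Finset.mem_Icc.mpr ⟨hj2, hjm⟩
  have hL := hpoly (Lagrange.basis (Finset.Icc 2 m) c j)
  rw [Finset.sum_eq_single_of_mem j hj fun i hi hij => by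
      rw [Lagrange.eval_basis_of_ne hij.symm hi, zero_mul, zero_smul],
    Lagrange.eval_basis_self hinj hj, one_mul] at hL
  refine (smul_eq_zero.mp hL).resolve_left fun h0 => ?_
  have h1 : j = 1 := by exact_mod_cast sub_eq_zero.mp h0
  omega
end

section
/- Let D be a division ring which is an algebra over ℂ (so that ℂ maps into the center of D), and suppose that the dimension of D as a ℂ-vector space is countable. Then the structure map ℂ → D is surjective, i.e., D = ℂ. -/
/-!
If some `x : D` were transcendental over `ℂ`, the resolvents `(x - a)⁻¹` for `a : ℂ` would be
linearly independent (clear denominators inside the commutative subring `ℂ[x]`), forcing the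
dimension of `D` to be at least the continuum. So every element of `D` is algebraic, hence integral,
over the algebraically closed field `ℂ`, and therefore lies in `ℂ`.
-/

open Polynomial in
/-- Noncommutative version of `Transcendental.linearIndependent_sub_inv`. -/
theorem linearIndependent_sub_inv_of_transcendental
    {F D : Type*} [Field F] [DivisionRing D] [Algebra F D] {x : D} (H : Transcendental F x) :
    LinearIndependent F fun a ↦ (x - algebraMap F D a)⁻¹ := by
  classical
  rw [transcendental_iff] at H
  refine linearIndependent_iff'.2 fun s m hm i hi ↦ ?_
  have hnz (a : F) : x - algebraMap F D a ≠ 0 := fun h ↦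
    X_sub_C_ne_zero a <| H (X - C a) (by simp [h])
  -- Denominators are cleared by products formed in `F[X]`, since `D` need not be commutative.
  have h1 : ∀ j ∈ s, aeval x (∏ k ∈ s, (X - C k)) * (x - algebraMap F D j)⁻¹ =
      aeval x (∏ k ∈ s.erase j, (X - C k)) := fun j hj ↦ by
    rw [← s.prod_erase_mul _ hj, map_mul, map_sub _ X (C j), aeval_X, aeval_C,
      mul_inv_cancel_right₀ (hnz j)]
  have h2 : aeval x (∑ j ∈ s, C (m j) * ∏ k ∈ s.erase j, (X - C k)) = 0 := by
    have h3 := congrArg (aeval x (∏ k ∈ s, (X - C k)) * ·) hm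
    simp only [mul_zero, Finset.mul_sum, mul_smul_comm] at h3
    rw [← h3, map_sum]
    refine Finset.sum_congr rfl fun j hj ↦ ?_
    rw [h1 j hj, map_mul, aeval_C, Algebra.smul_def]
  -- Evaluating the resulting polynomial identity at `i` isolates the coefficient `m i`.
  have h4 := congrArg (eval i) (H _ h2)
  rw [eval_finsetSum, Finset.sum_eq_single_of_mem i hi] at h4
  · rw [eval_mul, eval_C, eval_prod, eval_zero] at h4
    refine eq_zero_of_ne_zero_of_mul_right_eq_zero (Finset.prod_ne_zero_iff.2 fun j hj ↦ ?_) h4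
    simpa using sub_ne_zero.2 (Finset.ne_of_mem_erase hj).symm
  · intro j _ hji
    rw [eval_mul, eval_prod,
      Finset.prod_eq_zero (Finset.mem_erase_of_ne_of_mem hji.symm hi) (by simp), mul_zero]

/-- A division ring which is a `ℂ`-algebra of countable dimension over `ℂ`
is equal to `ℂ` itself: the structure map `ℂ → D` is surjective. -/
theorem stmt_5 {D : Type*} [DivisionRing D] [Algebra ℂ D]
    (h : Module.rank ℂ D ≤ Cardinal.aleph0) :
    Function.Surjective (algebraMap ℂ D) := by
  have : Algebra.IsIntegral ℂ D := ⟨fun x ↦ by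
    rw [← isAlgebraic_iff_isIntegral]
    by_contra hx
    have h1 := (linearIndependent_sub_inv_of_transcendental hx).cardinal_lift_le_rank
    have h2 := h1.trans (Cardinal.lift_le.2 h)
    rw [Cardinal.mk_complex, Cardinal.lift_continuum, Cardinal.lift_aleph0] at h2
    exact absurd h2 (not_le.2 Cardinal.aleph0_lt_continuum)⟩
  exact IsAlgClosed.algebraMap_bijective_of_isIntegral.2
end
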